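/- Assume n ≥ 3. Let v be a peripheral vertex of the hierarchical graph H_{n,k}, i.e., a vertex all of whose k coordinates are nonzero. Then the clustering coefficient of v equals ((n−1)^2 + (2k−3)(n−1) + 2 − 2k) / ((n+k−2)(n+k−3)), as an equality of rational numbers. -/

import Mathlib

/-!
The neighbours of a peripheral vertex `v` split into two families. Rule (1) gives the vertices
obtained from `v` by changing its last coordinate (`siblings`, there are `n - 1` of them), and
rule (2) gives the vertices `v_1 … v_i 0 … 0` with `i ≤ k - 2` (`truncations`, there are `k - 1`
of them); no rule (3) edge meets `v` since `v` has no zero coordinate. Hence `δ_v = n + k - 2`.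

The siblings form a clique by rule (1). The truncations are pairwise nonadjacent: they all end
in `0` and any two of them never carry distinct nonzero entries at the same position. A sibling is
adjacent to every truncation by rule (2) if its last coordinate is nonzero, and to no truncation
if its last coordinate is `0`. The purely graph-theoretic count `localEdges_eq` then yields
`ε_v = (n - 1).choose 2 + (n - 2) (k - 1)`, and the formula follows by algebra.

The vertices are indexed by `Fin (m + 1)`, that is `k = m + 1`.
-/

/-- Rule (1): the two vertices agree on the first `k-1` coordinates and differ
(hence differ in the last coordinate). -/
def rule1 {n k : ℕ} (x y : Fin k → ZMod n) : Prop :=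
  x ≠ y ∧ ∀ j : Fin k, (j : ℕ) + 1 < k → x j = y j

/-- Rule (2): `x = x_1…x_i 0…0` and `y = x_1…x_i x_{i+1}…x_k` with `x_j ≠ 0` for
`i+1 ≤ j ≤ k`, where `0 ≤ i ≤ k-2` (`i` is the length of the shared prefix,
0-indexed coordinates `≥ i` are zero on the `x` side and nonzero on the `y` side). -/
def rule2 {n k : ℕ} (x y : Fin k → ZMod n) : Prop :=
  ∃ i : ℕ, i + 2 ≤ k ∧ (∀ j : Fin k, (j : ℕ) < i → x j = y j) ∧
    (∀ j : Fin k, i ≤ (j : ℕ) → x j = 0) ∧ (∀ j : Fin k, i ≤ (j : ℕ) → y j ≠ 0)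

/-- Rule (3): `x = x_1…x_{i-1} x_i 0…0` and `y = x_1…x_{i-1} y_i 0…0` with
`x_i, y_i ≠ 0`, `x_i ≠ y_i` and `1 ≤ i ≤ k-1` (here `p` is the 0-indexed
position `i-1`, so `p ≤ k-2`). -/
def rule3 {n k : ℕ} (x y : Fin k → ZMod n) : Prop :=
  ∃ p : Fin k, (p : ℕ) + 2 ≤ k ∧ (∀ j : Fin k, j < p → x j = y j) ∧
    x p ≠ 0 ∧ y p ≠ 0 ∧ x p ≠ y p ∧ (∀ j : Fin k, p < j → x j = 0 ∧ y j = 0)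

/-- The hierarchical graph `H_{n,k}` on the vertex set `(Z_n)^k`, whose adjacency
is given exactly by the three rules above. -/
def hierGraph (n k : ℕ) : SimpleGraph (Fin k → ZMod n) :=
  SimpleGraph.fromRel (fun x y => rule1 x y ∨ rule2 x y ∨ rule3 x y)

/-- The root vertex `00…0` of `H_{n,k}`. -/
def hierRoot (n k : ℕ) : Fin k → ZMod n := fun _ => 0

/-- The set of peripheral vertices of `H_{n,k}`: those all of whose coordinates
are nonzero. -/
def peripheral (n k : ℕ) : Set (Fin k → ZMod n) := {v | ∀ j, v j ≠ 0}

/-- The minimum graph distance from a vertex to a set of vertices. -/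
noncomputable def distToSet {V : Type*} (G : SimpleGraph V) (v : V) (S : Set V) : ℕ :=
  sInf (G.dist v '' S)

/-- The eccentricity of a vertex: the maximum graph distance from it to any vertex. -/
noncomputable def eccentricity {V : Type*} (G : SimpleGraph V) (v : V) : ℕ :=
  sSup (Set.range (G.dist v))

/-- The radius of a graph: the minimum eccentricity over all vertices. -/
noncomputable def graphRadius {V : Type*} (G : SimpleGraph V) : ℕ :=
  sInf (Set.range (eccentricity G))

/-- The degree of a vertex, as the number of its neighbors. -/
noncomputable def vdeg {V : Type*} (G : SimpleGraph V) (v : V) : ℕ :=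
  (G.neighborSet v).ncard

/-- `ε_v`: the number of edges of the graph both of whose endpoints are
neighbors of `v`. -/
noncomputable def localEdges {V : Type*} (G : SimpleGraph V) (v : V) : ℕ :=
  {e : Sym2 V | e ∈ G.edgeSet ∧ ∀ w ∈ e, G.Adj v w}.ncard

/-- The clustering coefficient `c(v) = 2 ε_v / (δ_v (δ_v - 1))` of a vertex `v`. -/
noncomputable def clustering {V : Type*} (G : SimpleGraph V) (v : V) : ℚ :=
  (2 * (localEdges G v : ℚ)) / ((vdeg G v : ℚ) * ((vdeg G v : ℚ) - 1))

/-- The vertex `z^{01} = 0101…` (1-indexed: 0 at odd positions, 1 at even). -/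
def z01 (n k : ℕ) : Fin k → ZMod n := fun j => if (j : ℕ) % 2 = 0 then 0 else 1

/-- The vertex `z^{10} = 1010…` (1-indexed: 1 at odd positions, 0 at even). -/
def z10 (n k : ℕ) : Fin k → ZMod n := fun j => if (j : ℕ) % 2 = 0 then 1 else 0

/-! ### Counting edges in a neighbourhood -/

open Finset in
/-- If the neighbours of `v` are the disjoint union of a clique `W` and an independent set `U`, and
every vertex of `W` except `w₀` is adjacent to all of `U` while `w₀` is adjacent to none of it, then
the edges between neighbours of `v` are the pairs in `W` and the pairs in `(W \ {w₀}) × U`. -/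
lemma localEdges_eq {V : Type*} [DecidableEq V] (G : SimpleGraph V) (v w₀ : V) (W U : Finset V)
    (hN : ∀ y, G.Adj v y ↔ y ∈ W ∨ y ∈ U) (hdisj : ∀ x ∈ W, x ∉ U) (hw₀ : w₀ ∈ W)
    (hW : ∀ x ∈ W, ∀ y ∈ W, x ≠ y → G.Adj x y)
    (hU : ∀ x ∈ U, ∀ y ∈ U, ¬ G.Adj x y)
    (hWU : ∀ x ∈ W, ∀ y ∈ U, (G.Adj x y ↔ x ≠ w₀)) :
    localEdges G v = (#W).choose 2 + (#W - 1) * #U := by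
  have hset : {e : Sym2 V | e ∈ G.edgeSet ∧ ∀ w ∈ e, G.Adj v w} =
      ((W.offDiag.image Sym2.mk.uncurry ∪ ((W.erase w₀) ×ˢ U).image Sym2.mk.uncurry :
        Finset (Sym2 V)) : Set (Sym2 V)) := by
    ext e
    induction e using Sym2.ind with
    | _ x y =>
      simp only [Set.mem_ofPred_eq, SimpleGraph.mem_edgeSet, Sym2.mem_iff, forall_eq_or_imp,
        forall_eq, hN, coe_union, coe_image, Set.mem_union, Set.mem_image, mem_coe, mem_offDiag,
        mem_product, mem_erase, Prod.exists, Function.uncurry_apply_pair, Sym2.eq_iff]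
      constructor
      · rintro ⟨hxy, hx | hx, hy | hy⟩
        · exact Or.inl ⟨x, y, ⟨hx, hy, hxy.ne⟩, by simp⟩
        · exact Or.inr ⟨x, y, ⟨⟨(hWU x hx y hy).1 hxy, hx⟩, hy⟩, by simp⟩
        · exact Or.inr ⟨y, x, ⟨⟨(hWU y hy x hx).1 hxy.symm, hy⟩, hx⟩, by simp⟩
        · exact absurd hxy (hU x hx y hy)
      · rintro (⟨a, b, ⟨ha, hb, hab⟩, ⟨rfl, rfl⟩ | ⟨rfl, rfl⟩⟩ |
          ⟨a, b, ⟨⟨ha0, ha⟩, hb⟩, ⟨rfl, rfl⟩ | ⟨rfl, rfl⟩⟩)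
        · exact ⟨hW _ ha _ hb hab, Or.inl ha, Or.inl hb⟩
        · exact ⟨(hW _ ha _ hb hab).symm, Or.inl hb, Or.inl ha⟩
        · exact ⟨(hWU _ ha _ hb).2 ha0, Or.inl ha, Or.inr hb⟩
        · exact ⟨((hWU _ ha _ hb).2 ha0).symm, Or.inr hb, Or.inl ha⟩
  have hinj : Set.InjOn (Sym2.mk.uncurry : V × V → Sym2 V) ((W.erase w₀) ×ˢ U : Finset (V × V)) := by
    rintro ⟨a, b⟩ hab ⟨c, d⟩ hcd h
    simp only [coe_product, Set.mem_prod, mem_coe, mem_erase] at hab hcd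
    simp only [Function.uncurry_apply_pair, Sym2.eq_iff] at h
    rcases h with ⟨rfl, rfl⟩ | ⟨rfl, rfl⟩
    · rfl
    · exact absurd hcd.2 (hdisj _ hab.1.2)
  have hdj : Disjoint (W.offDiag.image Sym2.mk.uncurry)
      (((W.erase w₀) ×ˢ U).image Sym2.mk.uncurry) := by
    rw [Finset.disjoint_left]
    intro e he he'
    simp only [mem_image, mem_offDiag, mem_product, mem_erase, Prod.exists,
      Function.uncurry_apply_pair] at he he'
    obtain ⟨a, b, ⟨ha, hb, -⟩, rfl⟩ := he
    obtain ⟨c, d, ⟨-, hd⟩, h⟩ := he'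
    rcases Sym2.eq_iff.1 h with ⟨rfl, rfl⟩ | ⟨rfl, rfl⟩
    · exact hdisj _ hb hd
    · exact hdisj _ ha hd
  unfold localEdges
  rw [hset, Set.ncard_coe_finset, card_union_of_disjoint hdj, card_image_of_injOn hinj,
    card_product, card_erase_of_mem hw₀]
  congr 1
  exact Sym2.card_image_offDiag W

section
variable {n m : ℕ}

/-! ### The two families of neighbours -/

/-- The vertex `v_1 … v_i 0 … 0`. -/
def truncate (v : Fin (m + 1) → ZMod n) (i : Fin m) : Fin (m + 1) → ZMod n :=
  fun j => if (j : ℕ) < i then v j else 0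

open Classical in
/-- The vertices differing from `v` in the last coordinate only. -/
noncomputable def siblings [NeZero n] (v : Fin (m + 1) → ZMod n) :
    Finset (Fin (m + 1) → ZMod n) :=
  (Finset.univ.erase (v (Fin.last m))).image (Function.update v (Fin.last m))

open Classical in
/-- The vertices `v_1 … v_i 0 … 0` with `i + 2 ≤ k`, where `k = m + 1`. -/
noncomputable def truncations (v : Fin (m + 1) → ZMod n) : Finset (Fin (m + 1) → ZMod n) :=
  Finset.univ.image (truncate v)

lemma card_siblings [NeZero n] (v : Fin (m + 1) → ZMod n) : (siblings v).card = n - 1 := by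
  rw [siblings, Finset.card_image_of_injective _ (Function.update_injective v _),
    Finset.card_erase_of_mem (Finset.mem_univ _), Finset.card_univ, ZMod.card]

lemma truncate_injective {v : Fin (m + 1) → ZMod n} (hv : ∀ j, v j ≠ 0) :
    Function.Injective (truncate v) := by
  -- the entry at the smaller of two distinct truncation positions tells them apart
  have key : ∀ a b : Fin m, a < b → truncate v a ≠ truncate v b := by
    intro a b hab h
    have := congrFun h a.castSucc
    simp only [truncate, Fin.val_castSucc, lt_irrefl, if_false, if_pos (Fin.lt_def.1 hab)] at this
    exact hv _ this.symm
  intro a b h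
  rcases lt_trichotomy a b with hab | hab | hab
  · exact absurd h (key _ _ hab)
  · exact hab
  · exact absurd h.symm (key _ _ hab)

lemma card_truncations {v : Fin (m + 1) → ZMod n} (hv : ∀ j, v j ≠ 0) :
    (truncations v).card = m := by
  rw [truncations, Finset.card_image_of_injective _ (truncate_injective hv), Finset.card_univ,
    Fintype.card_fin]

lemma mem_siblings [NeZero n] {v y : Fin (m + 1) → ZMod n} :
    y ∈ siblings v ↔ v ≠ y ∧ ∀ j : Fin (m + 1), (j : ℕ) < m → y j = v j := by
  simp only [siblings, Finset.mem_image, Finset.mem_erase, Finset.mem_univ, and_true]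
  constructor
  · rintro ⟨a, ha, rfl⟩
    refine ⟨fun h => ha ?_, fun j hj => ?_⟩
    · rw [h]; simp
    · exact Function.update_of_ne (by rintro rfl; simp at hj) _ _
  · rintro ⟨hne, h⟩
    have hy : Function.update v (Fin.last m) (y (Fin.last m)) = y := by
      funext j
      by_cases hj : j = Fin.last m
      · subst hj; simp
      · rw [Function.update_of_ne hj, h j (Fin.val_lt_last hj)]
    refine ⟨_, fun hl => hne ?_, hy⟩
    rw [← hy, hl, Function.update_eq_self]

lemma mem_truncations {v y : Fin (m + 1) → ZMod n} :
    y ∈ truncations v ↔ ∃ i < m, (∀ j : Fin (m + 1), (j : ℕ) < i → y j = v j) ∧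
      ∀ j : Fin (m + 1), i ≤ (j : ℕ) → y j = 0 := by
  simp only [truncations, Finset.mem_image, Finset.mem_univ, true_and]
  constructor
  · rintro ⟨i, rfl⟩
    exact ⟨i, i.2, fun j hj => by simp [truncate, hj],
      fun j hj => by simp [truncate, not_lt.2 hj]⟩
  · rintro ⟨i, hi, h1, h2⟩
    refine ⟨⟨i, hi⟩, funext fun j => ?_⟩
    by_cases hj : (j : ℕ) < i
    · simp [truncate, hj, h1]
    · simp [truncate, hj, h2 j (not_lt.1 hj)]

/-! ### Adjacency around a peripheral vertex -/

lemma hierGraph_adj {k : ℕ} {x y : Fin k → ZMod n} : (hierGraph n k).Adj x y ↔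
    x ≠ y ∧ ((rule1 x y ∨ rule2 x y ∨ rule3 x y) ∨ (rule1 y x ∨ rule2 y x ∨ rule3 y x)) :=
  SimpleGraph.fromRel_adj _ _ _

/-- A peripheral vertex meets no edge of type (3), nor is it the zero-padded end of an edge of
type (2), as those edges need a zero last coordinate. -/
lemma adj_peripheral_iff [NeZero n] {v y : Fin (m + 1) → ZMod n} (hv : ∀ j, v j ≠ 0) :
    (hierGraph n (m + 1)).Adj v y ↔ y ∈ siblings v ∨ y ∈ truncations v := by
  rw [hierGraph_adj, mem_siblings, mem_truncations]
  have hlast : ∀ p : Fin (m + 1), (p : ℕ) + 2 ≤ m + 1 → p < Fin.last m := by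
    intro p hp; rw [Fin.lt_def, Fin.val_last]; omega
  constructor
  · rintro ⟨hne, (h | ⟨i, hi, -, h, -⟩ | ⟨p, hp, -, -, -, -, h⟩) |
      (h | ⟨i, hi, h1, h2, -⟩ | ⟨p, hp, -, -, -, -, h⟩)⟩
    · exact Or.inl ⟨hne, fun j hj => (h.2 j (by omega)).symm⟩
    · exact absurd (h (Fin.last m) (by simp; omega)) (hv _)
    · exact absurd (h _ (hlast p hp)).1 (hv _)
    · exact Or.inl ⟨hne, fun j hj => h.2 j (by omega)⟩
    · exact Or.inr ⟨i, by omega, h1, h2⟩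
    · exact absurd (h _ (hlast p hp)).2 (hv _)
  · rintro (⟨hne, h⟩ | ⟨i, hi, h1, h2⟩)
    · exact ⟨hne, Or.inl (Or.inl ⟨hne, fun j hj => (h j (by omega)).symm⟩)⟩
    · refine ⟨?_, Or.inr (Or.inr (Or.inl ⟨i, by omega, h1, h2, fun j _ => hv j⟩))⟩
      rintro rfl
      exact hv _ (h2 (Fin.last m) (by simp; omega))

/-- Two distinct vertices sharing all but the last coordinate are adjacent by rule (1). -/
lemma siblings_clique [NeZero n] {v x y : Fin (m + 1) → ZMod n} (hx : x ∈ siblings v)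
    (hy : y ∈ siblings v) (hxy : x ≠ y) : (hierGraph n (m + 1)).Adj x y := by
  rw [mem_siblings] at hx hy
  exact hierGraph_adj.2 ⟨hxy, Or.inl (Or.inl ⟨hxy, fun j hj => by
    rw [hx.2 j (by omega), hy.2 j (by omega)]⟩)⟩

lemma not_rule2_of_last {x y : Fin (m + 1) → ZMod n} (hy : y (Fin.last m) = 0) :
    ¬ rule2 x y := by
  rintro ⟨i, hi, -, -, h⟩
  exact h (Fin.last m) (by simp; omega) hy

lemma not_rule3_of_common {v x y : Fin (m + 1) → ZMod n}
    (hx : ∀ j : Fin (m + 1), (j : ℕ) < m → x j = 0 ∨ x j = v j)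
    (hy : ∀ j : Fin (m + 1), (j : ℕ) < m → y j = 0 ∨ y j = v j) : ¬ rule3 x y := by
  rintro ⟨p, hp, -, hxp, hyp, hne, -⟩
  exact hne (((hx p (by omega)).resolve_left hxp).trans
    ((hy p (by omega)).resolve_left hyp).symm)

/-- Vertices with last coordinate `0` whose other coordinates all lie in `{0, v_j}` can only be
adjacent by rule (1), which would make them equal. -/
lemma not_adj_of_common {v x y : Fin (m + 1) → ZMod n}
    (hx0 : x (Fin.last m) = 0) (hy0 : y (Fin.last m) = 0)
    (hx : ∀ j : Fin (m + 1), (j : ℕ) < m → x j = 0 ∨ x j = v j)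
    (hy : ∀ j : Fin (m + 1), (j : ℕ) < m → y j = 0 ∨ y j = v j) :
    ¬ (hierGraph n (m + 1)).Adj x y := by
  have h1 : ∀ {x y : Fin (m + 1) → ZMod n}, x (Fin.last m) = 0 → y (Fin.last m) = 0 →
      ¬ rule1 x y := by
    rintro x y hx0 hy0 ⟨hne, h⟩
    refine hne (funext fun j => ?_)
    by_cases hj : j = Fin.last m
    · rw [hj, hx0, hy0]
    · have := Fin.val_lt_last hj
      exact h j (by omega)
  rw [hierGraph_adj]
  rintro ⟨-, (h | h | h) | (h | h | h)⟩
  · exact h1 hx0 hy0 h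
  · exact not_rule2_of_last hy0 h
  · exact not_rule3_of_common hx hy h
  · exact h1 hy0 hx0 h
  · exact not_rule2_of_last hx0 h
  · exact not_rule3_of_common hy hx h

lemma truncations_last {v x : Fin (m + 1) → ZMod n} (hx : x ∈ truncations v) :
    x (Fin.last m) = 0 := by
  obtain ⟨i, hi, -, h⟩ := mem_truncations.1 hx
  exact h _ (by simp; omega)

lemma truncations_common {v x : Fin (m + 1) → ZMod n} (hx : x ∈ truncations v)
    (j : Fin (m + 1)) : x j = 0 ∨ x j = v j := by
  obtain ⟨i, -, h1, h2⟩ := mem_truncations.1 hx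
  rcases lt_or_ge (j : ℕ) i with hj | hj
  · exact Or.inr (h1 j hj)
  · exact Or.inl (h2 j hj)

/-- A truncation of `v` has a zero before the last position, where a sibling keeps the nonzero
coordinates of `v`. -/
lemma siblings_not_mem_truncations [NeZero n] {v x : Fin (m + 1) → ZMod n} (hv : ∀ j, v j ≠ 0)
    (hx : x ∈ siblings v) : x ∉ truncations v := by
  intro hx'
  obtain ⟨i, hi, -, h⟩ := mem_truncations.1 hx'
  have h0 := h ⟨i, by omega⟩ le_rfl
  rw [(mem_siblings.1 hx).2 ⟨i, by omega⟩ hi] at h0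
  exact hv _ h0

lemma adj_sibling_truncation_iff [NeZero n] {v x y : Fin (m + 1) → ZMod n} (hv : ∀ j, v j ≠ 0)
    (hx : x ∈ siblings v) (hy : y ∈ truncations v) :
    (hierGraph n (m + 1)).Adj x y ↔ x ≠ Function.update v (Fin.last m) 0 := by
  have hx' := (mem_siblings.1 hx).2
  constructor
  · rintro h rfl
    exact not_adj_of_common (v := v) (by simp) (truncations_last hy) (fun j hj => Or.inr (hx' j hj))
      (fun j _ => truncations_common hy j) h
  · intro hne
    have hxl : x (Fin.last m) ≠ 0 := by
      intro h0
      refine hne (funext fun j => ?_)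
      by_cases hj : j = Fin.last m
      · subst hj; simp [h0]
      · rw [Function.update_of_ne hj, hx' j (Fin.val_lt_last hj)]
    -- such a sibling is itself peripheral and has the same truncations as `v`
    have hxp : ∀ j, x j ≠ 0 := by
      intro j
      by_cases hj : j = Fin.last m
      · rw [hj]; exact hxl
      · rw [hx' j (Fin.val_lt_last hj)]; exact hv j
    refine (adj_peripheral_iff hxp).2 (Or.inr ?_)
    obtain ⟨i, hi, h1, h2⟩ := mem_truncations.1 hy
    exact mem_truncations.2 ⟨i, hi, fun j hj => by rw [h1 j hj, hx' j (by omega)], h2⟩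

/-! ### Degree and number of local edges -/

lemma vdeg_peripheral [NeZero n] {v : Fin (m + 1) → ZMod n} (hv : ∀ j, v j ≠ 0) :
    vdeg (hierGraph n (m + 1)) v = n - 1 + m := by
  classical
  have hset : (hierGraph n (m + 1)).neighborSet v =
      ((siblings v ∪ truncations v : Finset _) : Set (Fin (m + 1) → ZMod n)) := by
    ext y
    simp [adj_peripheral_iff hv]
  rw [vdeg, hset, Set.ncard_coe_finset, Finset.card_union_of_disjoint
    (Finset.disjoint_left.2 fun x => siblings_not_mem_truncations hv), card_siblings,
    card_truncations hv]

lemma localEdges_peripheral [NeZero n] {v : Fin (m + 1) → ZMod n} (hv : ∀ j, v j ≠ 0) :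
    localEdges (hierGraph n (m + 1)) v = (n - 1).choose 2 + (n - 1 - 1) * m := by
  classical
  rw [localEdges_eq (hierGraph n (m + 1)) v (Function.update v (Fin.last m) 0) (siblings v)
    (truncations v) (fun y => adj_peripheral_iff hv) (fun x => siblings_not_mem_truncations hv)
    ?_ (fun x hx y hy => siblings_clique hx hy)
    (fun x hx y hy => not_adj_of_common (truncations_last hx) (truncations_last hy)
      (fun j _ => truncations_common hx j) (fun j _ => truncations_common hy j))
    (fun x hx y hy => adj_sibling_truncation_iff hv hx hy), card_siblings, card_truncations hv]
  exact Finset.mem_image_of_mem _ (Finset.mem_erase.2 ⟨(hv _).symm, Finset.mem_univ _⟩)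

end

/-- for `n ≥ 3`, a peripheral vertex of `H_{n,k}` has clustering
coefficient `((n-1)^2 + (2k-3)(n-1) + 2 - 2k) / ((n+k-2)(n+k-3))`. -/
theorem hierGraph_clustering_peripheral (n k : ℕ) (hn : 3 ≤ n) (hk : 1 ≤ k)
    (v : Fin k → ZMod n) (hv : ∀ j : Fin k, v j ≠ 0) :
    clustering (hierGraph n k) v =
      (((n : ℚ) - 1) ^ 2 + (2 * (k : ℚ) - 3) * ((n : ℚ) - 1) + 2 - 2 * (k : ℚ)) /
        (((n : ℚ) + (k : ℚ) - 2) * ((n : ℚ) + (k : ℚ) - 3)) := by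
  obtain ⟨m, rfl⟩ : ∃ m, k = m + 1 := ⟨k - 1, by omega⟩
  obtain ⟨q, rfl⟩ : ∃ q, n = q + 2 := ⟨n - 2, by omega⟩
  rw [clustering, vdeg_peripheral hv, localEdges_peripheral hv]
  have e1 : q + 2 - 1 = q + 1 := rfl
  have e2 : q + 1 - 1 = q := rfl
  rw [e1, e2]
  push_cast [Nat.cast_choose_two]
  congr 1 <;> ring
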